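/- In a finite model-checking graph G, there exists an eventually sequence starting at a node n if and only if there is a finite path in G from n to a self-fulfilling strongly connected component. -/

import Mathlib

/-!
The conditions on `until` and on edges make an eventuality persist: along any path, once
`ψ₁ U ψ₂` holds it holds at every later node unless `ψ₂` occurs in between (`until_persists`).

Given an eventually sequence `p`, finiteness yields a node `a` visited infinitely often, and from
the first visit on `p` stays in the component of `a`. An eventuality held somewhere in this
component is carried along a path back to `a`, unless it is fulfilled on the way; at `a` it is
fulfilled by the tail of `p`, which lies in the component.

Conversely, in a nontrivial strongly connected component any two nodes are joined by a path of
positive length, so a path from `n` into the component extends to an infinite path visiting each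
of its nodes infinitely often (`exists_path_through`). An eventuality met on that path is either
fulfilled, or carried into the component, where self-fulfilment names a node that the path
visits again later.
-/


/-- Temporal formulas over an underlying constraint system with constraints
`C` and variables `V`: φ ::= K(c) | B(c) | ¬φ | φ ∧ ψ | ∃x φ | ○φ | φ U ψ. -/
inductive TForm (C V : Type) : Type where
  | K : C → TForm C V
  | B : C → TForm C V
  | neg : TForm C V → TForm C V
  | and : TForm C V → TForm C V → TForm C V
  | ex : V → TForm C V → TForm C V
  | next : TForm C V → TForm C V
  | until : TForm C V → TForm C V → TForm C V

/-- Negation with double negations identified: ¬¬ψ = ψ. -/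
def TForm.nneg {C V : Type} : TForm C V → TForm C V
  | .neg ψ => ψ
  | ψ => .neg ψ

/-- The size of a formula: the number of operators occurring in it. -/
def TForm.size {C V : Type} : TForm C V → ℕ
  | .K _ => 1
  | .B _ => 1
  | .neg ψ => ψ.size + 1
  | .and ψ₁ ψ₂ => ψ₁.size + ψ₂.size + 1
  | .ex _ ψ => ψ.size + 1
  | .next ψ => ψ.size + 1
  | .until ψ₁ ψ₂ => ψ₁.size + ψ₂.size + 1

/-- `X` satisfies the closure conditions for `φ` (with negation read modulo
the identification ¬¬ψ = ψ):
* φ ∈ X;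
* ¬ψ ∈ X iff ψ ∈ X;
* if ψ₁ ∧ ψ₂ ∈ X then ψ₁, ψ₂ ∈ X;
* if ∃x ψ ∈ X then ψ ∈ X;
* if ○ψ ∈ X then ψ ∈ X;
* if ¬○ψ ∈ X then ○¬ψ ∈ X;
* if ψ₁ U ψ₂ ∈ X then ψ₁, ψ₂, ○(ψ₁ U ψ₂) ∈ X. -/
def ClosedFor {C V : Type} (φ : TForm C V) (X : Set (TForm C V)) : Prop :=
  φ ∈ X ∧
  (∀ ψ : TForm C V, ψ.nneg ∈ X ↔ ψ ∈ X) ∧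
  (∀ ψ₁ ψ₂ : TForm C V, TForm.and ψ₁ ψ₂ ∈ X → ψ₁ ∈ X ∧ ψ₂ ∈ X) ∧
  (∀ (x : V) (ψ : TForm C V), TForm.ex x ψ ∈ X → ψ ∈ X) ∧
  (∀ ψ : TForm C V, TForm.next ψ ∈ X → ψ ∈ X) ∧
  (∀ ψ : TForm C V, (TForm.next ψ).nneg ∈ X → TForm.next ψ.nneg ∈ X) ∧
  (∀ ψ₁ ψ₂ : TForm C V, TForm.until ψ₁ ψ₂ ∈ X →
      ψ₁ ∈ X ∧ ψ₂ ∈ X ∧ TForm.next (TForm.until ψ₁ ψ₂) ∈ X)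

/-- The restriction of the edge relation to paths entirely contained in a set
𝒞 of nodes. -/
def EdgeIn {N : Type} (edge : N → N → Prop) (𝒞 : Set N) (a b : N) : Prop :=
  a ∈ 𝒞 ∧ b ∈ 𝒞 ∧ edge a b

/-- A strongly connected component: a maximal set of nodes such that every
node is reachable from every other node along a directed path entirely
contained within it. -/
def IsSCC {N : Type} (edge : N → N → Prop) (𝒞 : Set N) : Prop :=
  (∀ a ∈ 𝒞, ∀ b ∈ 𝒞, Relation.ReflTransGen (EdgeIn edge 𝒞) a b) ∧
  (∀ 𝒞' : Set N, 𝒞 ⊆ 𝒞' →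
    (∀ a ∈ 𝒞', ∀ b ∈ 𝒞', Relation.ReflTransGen (EdgeIn edge 𝒞') a b) → 𝒞' = 𝒞)

/-- A set of nodes is nontrivial iff it has more than one node or it contains
a node with a self-loop. -/
def NontrivialComp {N : Type} (edge : N → N → Prop) (𝒞 : Set N) : Prop :=
  (∃ a ∈ 𝒞, ∃ b ∈ 𝒞, a ≠ b) ∨ (∃ a ∈ 𝒞, edge a a)

/-- A self-fulfilling SCC: a nontrivial SCC 𝒞 such that for every node n in 𝒞
and every formula ψ₁ U ψ₂ ∈ 𝒬ₙ there is a node m in 𝒞 with ψ₂ ∈ 𝒬ₘ. -/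
def SelfFulfillingSCC {C V N : Type} (edge : N → N → Prop)
    (Q : N → Set (TForm C V)) (𝒞 : Set N) : Prop :=
  IsSCC edge 𝒞 ∧ NontrivialComp edge 𝒞 ∧
  ∀ n ∈ 𝒞, ∀ ψ₁ ψ₂ : TForm C V, TForm.until ψ₁ ψ₂ ∈ Q n →
    ∃ m ∈ 𝒞, ψ₂ ∈ Q m

/-- An eventually sequence: an infinite path in the graph such that whenever
ψ₁ U ψ₂ ∈ 𝒬ₙᵢ for some i, there exists j ≥ i with ψ₂ ∈ 𝒬ₙⱼ. -/
def EventuallySeq {C V N : Type} (edge : N → N → Prop)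
    (Q : N → Set (TForm C V)) (p : ℕ → N) : Prop :=
  (∀ i : ℕ, edge (p i) (p (i + 1))) ∧
  ∀ (i : ℕ) (ψ₁ ψ₂ : TForm C V), TForm.until ψ₁ ψ₂ ∈ Q (p i) →
    ∃ j : ℕ, i ≤ j ∧ ψ₂ ∈ Q (p j)

/-- There is a walk of exactly `d` edges from `a` to `b`. -/
def WalkLen {N : Type} (edge : N → N → Prop) : ℕ → N → N → Prop
  | 0, a, b => a = b
  | d + 1, a, b => ∃ c, edge a c ∧ WalkLen edge d c b

lemma exists_walkLen {N : Type} {edge : N → N → Prop} {a b : N}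
    (h : Relation.ReflTransGen edge a b) : ∃ d, WalkLen edge d a b := by
  induction h using Relation.ReflTransGen.head_induction_on with
  | refl => exact ⟨0, rfl⟩
  | head hac _ ih =>
    obtain ⟨d, hd⟩ := ih
    exact ⟨d + 1, _, hac, hd⟩

/-- Concatenation of infinitely many nonempty walks: if each waypoint `w k` can be left by an edge
leading on to `w (k + 1)`, some infinite path from `n` passes through all waypoints in order. The
path is the first component of a run over states `(a, k, d)`, where `w k` is the next waypoint and
`d` is the length of a walk from `a` to it. -/
lemma exists_path_through {N : Type} {edge : N → N → Prop} {n : N} {w : ℕ → N}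
    (h0 : Relation.ReflTransGen edge n (w 0))
    (hw : ∀ k, ∃ c, edge (w k) c ∧ Relation.ReflTransGen edge c (w (k + 1))) :
    ∃ p : ℕ → N, p 0 = n ∧ (∀ i, edge (p i) (p (i + 1))) ∧ ∀ k, ∃ i, k ≤ i ∧ p i = w k := by
  obtain ⟨d₀, hd₀⟩ := exists_walkLen h0
  let S := {s : N × ℕ × ℕ // WalkLen edge s.2.2 s.1 (w s.2.1)}
  have step : ∀ s : S, ∃ t : S, edge s.1.1 t.1.1 ∧
      ((s.1.2.2 = 0 ∧ t.1.2.1 = s.1.2.1 + 1) ∨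
        (s.1.2.2 = t.1.2.2 + 1 ∧ t.1.2.1 = s.1.2.1)) := by
    rintro ⟨⟨a, k, d⟩, h⟩
    cases d with
    | zero =>
      obtain rfl : a = w k := h
      obtain ⟨c, hc, hcw⟩ := hw k
      obtain ⟨d, hd⟩ := exists_walkLen hcw
      exact ⟨⟨(c, k + 1, d), hd⟩, hc, Or.inl ⟨rfl, rfl⟩⟩
    | succ d =>
      obtain ⟨c, hc, hd⟩ := h
      exact ⟨⟨(c, k, d), hd⟩, hc, Or.inr ⟨rfl, rfl⟩⟩
  choose f hf_edge hf using step
  let r : ℕ → S := fun i => f^[i] ⟨(n, 0, d₀), hd₀⟩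
  have hr : ∀ i, r (i + 1) = f (r i) := fun i => Function.iterate_succ_apply' f i _
  have hle : ∀ i, (r i).1.2.1 ≤ i := by
    intro i
    induction i with
    | zero => exact le_refl 0
    | succ i ih =>
      rw [hr]
      rcases hf (r i) with h | h <;> omega
  -- Counting down the remaining distance brings the run to its current waypoint.
  have reach : ∀ d i, (r i).1.2.2 = d →
      ∃ j, (r j).1.2.1 = (r i).1.2.1 ∧ (r j).1.2.2 = 0 := by
    intro d
    induction d with
    | zero => exact fun i hi => ⟨i, rfl, hi⟩
    | succ d ih =>
      intro i hi
      have h := hf (r i)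
      rw [← hr] at h
      obtain ⟨j, hj, hj0⟩ := ih (i + 1) (by omega)
      exact ⟨j, by omega, hj0⟩
  have hit : ∀ k, ∃ j, (r j).1.2.1 = k ∧ (r j).1.2.2 = 0 := by
    intro k
    induction k with
    | zero => exact reach _ 0 rfl
    | succ k ih =>
      obtain ⟨j, hj, hj0⟩ := ih
      have h := hf (r j)
      rw [← hr] at h
      obtain ⟨l, hl, hl0⟩ := reach _ (j + 1) rfl
      exact ⟨l, by omega, hl0⟩
  refine ⟨fun i => (r i).1.1, rfl, fun i => ?_, fun k => ?_⟩
  · simp only [hr]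
    exact hf_edge (r i)
  · obtain ⟨j, rfl, hj0⟩ := hit k
    refine ⟨j, hle j, ?_⟩
    have h := (r j).2
    rw [hj0] at h
    exact h

lemma reflTransGen_of_edgeIn {N : Type} {edge : N → N → Prop} {𝒞 : Set N} {a b : N}
    (h : Relation.ReflTransGen (EdgeIn edge 𝒞) a b) : Relation.ReflTransGen edge a b :=
  Relation.ReflTransGen.mono (fun _ _ h => h.2.2) a b h

/-- The nodes mutually reachable with `a` form an SCC. -/
lemma isSCC_mutual {N : Type} (edge : N → N → Prop) (a : N) :
    IsSCC edge {b | Relation.ReflTransGen edge a b ∧ Relation.ReflTransGen edge b a} := by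
  constructor
  · rintro x hx y hy
    have hxy : Relation.ReflTransGen edge x y := hx.2.trans hy.1
    induction hxy using Relation.ReflTransGen.head_induction_on with
    | refl => exact .refl
    | @head x c hxc hcy ih =>
      have hc : c ∈ {b | Relation.ReflTransGen edge a b ∧ Relation.ReflTransGen edge b a} :=
        ⟨hx.1.tail hxc, hcy.trans hy.2⟩
      exact .head ⟨hx, hc, hxc⟩ (ih hc)
  · intro 𝒞' hsub hconn
    refine Set.Subset.antisymm (fun x hx => ?_) hsub
    have ha : a ∈ 𝒞' := hsub ⟨.refl, .refl⟩
    exact ⟨reflTransGen_of_edgeIn (hconn a ha x hx), reflTransGen_of_edgeIn (hconn x hx a ha)⟩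

/-- In a nontrivial strongly connected set, any two nodes (possibly equal) are joined by a path of
positive length. -/
lemma exists_step_of_nontrivial {N : Type} {edge : N → N → Prop} {𝒞 : Set N}
    (hconn : ∀ a ∈ 𝒞, ∀ b ∈ 𝒞, Relation.ReflTransGen (EdgeIn edge 𝒞) a b)
    (hnt : NontrivialComp edge 𝒞) {a b : N} (ha : a ∈ 𝒞) (hb : b ∈ 𝒞) :
    ∃ c, edge a c ∧ Relation.ReflTransGen edge c b := by
  have key : ∃ c ∈ 𝒞, edge a c := by
    have hne : ∀ z ∈ 𝒞, a ≠ z → ∃ c ∈ 𝒞, edge a c := by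
      intro z hz haz
      rcases (hconn a ha z hz).cases_head with h | ⟨c, hc, _⟩
      · exact absurd h haz
      · exact ⟨c, hc.2.1, hc.2.2⟩
    rcases hnt with ⟨x, hx, y, hy, hxy⟩ | ⟨z, hz, hzz⟩
    · by_cases hax : a = x
      · exact hne y hy (hax ▸ hxy)
      · exact hne x hx hax
    · by_cases haz : a = z
      · exact ⟨a, ha, haz ▸ hzz⟩
      · exact hne z hz haz
  obtain ⟨c, hc, hac⟩ := key
  exact ⟨c, hac, reflTransGen_of_edgeIn (hconn c hc b hb)⟩

/-- An unfulfilled eventuality is passed on to every reachable node: along a path from `a` to `b`,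
either `ψ₁ U ψ₂` still holds at `b`, or `ψ₂` holds at a node on the way. -/
lemma until_persists {C V N : Type} {edge : N → N → Prop} {Q : N → Set (TForm C V)}
    {ψ₁ ψ₂ : TForm C V}
    (hstep : ∀ x y, edge x y → TForm.until ψ₁ ψ₂ ∈ Q x → ψ₂ ∈ Q x ∨ TForm.until ψ₁ ψ₂ ∈ Q y)
    {a b : N} (hab : Relation.ReflTransGen edge a b) (ha : TForm.until ψ₁ ψ₂ ∈ Q a) :
    TForm.until ψ₁ ψ₂ ∈ Q b ∨
      ∃ m, Relation.ReflTransGen edge a m ∧ Relation.ReflTransGen edge m b ∧ ψ₂ ∈ Q m := by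
  induction hab with
  | refl => exact Or.inl ha
  | @tail b c hab hbc ih =>
    rcases ih with h | ⟨m, h₁, h₂, h₃⟩
    · rcases hstep b c hbc h with h' | h'
      · exact Or.inr ⟨b, hab, .single hbc, h'⟩
      · exact Or.inl h'
    · exact Or.inr ⟨m, h₁, h₂.tail hbc, h₃⟩

lemma reflTransGen_of_path {N : Type} {edge : N → N → Prop} {p : ℕ → N}
    (hp : ∀ i, edge (p i) (p (i + 1))) {i j : ℕ} (hij : i ≤ j) :
    Relation.ReflTransGen edge (p i) (p j) := by
  induction j, hij using Nat.le_induction with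
  | base => exact .refl
  | succ j _ ih => exact ih.tail (hp j)

/-- In a finite model-checking graph G for φ, there exists an eventually
sequence starting at a node n iff there is a finite path in G from n to a
self-fulfilling strongly connected component. -/
theorem eventually_seq_iff_path_to_self_fulfilling_scc
    (C V N : Type) [Finite N] (edge : N → N → Prop)
    (φ : TForm C V) (CL : Set (TForm C V))
    -- CL is the closure of φ: the smallest set satisfying the closure conditions
    (hCL : ClosedFor φ CL) (hCLmin : ∀ X : Set (TForm C V), ClosedFor φ X → CL ⊆ X)
    (Q : N → Set (TForm C V))
    -- each node carries a set 𝒬ₙ ⊆ CL(φ)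
    (hsub : ∀ n : N, Q n ⊆ CL)
    -- ψ ∈ 𝒬ₙ iff ¬ψ ∉ 𝒬ₙ
    (hcons : ∀ (n : N) (ψ : TForm C V), ψ ∈ CL → (ψ ∈ Q n ↔ ψ.nneg ∉ Q n))
    -- ψ₁ ∧ ψ₂ ∈ 𝒬ₙ iff ψ₁ ∈ 𝒬ₙ and ψ₂ ∈ 𝒬ₙ
    (hand : ∀ (n : N) (ψ₁ ψ₂ : TForm C V), TForm.and ψ₁ ψ₂ ∈ CL →
      (TForm.and ψ₁ ψ₂ ∈ Q n ↔ ψ₁ ∈ Q n ∧ ψ₂ ∈ Q n))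
    -- ¬○ψ ∈ 𝒬ₙ iff ○¬ψ ∈ 𝒬ₙ
    (hnegnext : ∀ (n : N) (ψ : TForm C V), (TForm.next ψ).nneg ∈ CL →
      ((TForm.next ψ).nneg ∈ Q n ↔ TForm.next ψ.nneg ∈ Q n))
    -- ψ₁ U ψ₂ ∈ 𝒬ₙ iff ψ₂ ∈ 𝒬ₙ, or both ψ₁ ∈ 𝒬ₙ and ○(ψ₁ U ψ₂) ∈ 𝒬ₙ
    (huntil : ∀ (n : N) (ψ₁ ψ₂ : TForm C V), TForm.until ψ₁ ψ₂ ∈ CL →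
      (TForm.until ψ₁ ψ₂ ∈ Q n ↔
        ψ₂ ∈ Q n ∨ (ψ₁ ∈ Q n ∧ TForm.next (TForm.until ψ₁ ψ₂) ∈ Q n)))
    -- along every edge, ○ψ ∈ 𝒬ₙ₁ iff ψ ∈ 𝒬ₙ₂
    (hedge : ∀ n₁ n₂ : N, edge n₁ n₂ → ∀ ψ : TForm C V, TForm.next ψ ∈ CL →
      (TForm.next ψ ∈ Q n₁ ↔ ψ ∈ Q n₂))
    (n : N) :
    (∃ p : ℕ → N, p 0 = n ∧ EventuallySeq edge Q p) ↔
    (∃ 𝒞 : Set N, SelfFulfillingSCC edge Q 𝒞 ∧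
      ∃ m ∈ 𝒞, Relation.ReflTransGen edge n m) := by
  have hstep : ∀ (ψ₁ ψ₂ : TForm C V) (x y : N), edge x y → TForm.until ψ₁ ψ₂ ∈ Q x →
      ψ₂ ∈ Q x ∨ TForm.until ψ₁ ψ₂ ∈ Q y := by
    intro ψ₁ ψ₂ x y hxy hx
    have hcl := hsub x hx
    obtain ⟨-, -, -, -, -, -, hU⟩ := hCL
    rcases (huntil x ψ₁ ψ₂ hcl).1 hx with h | h
    · exact Or.inl h
    · exact Or.inr ((hedge x y hxy _ (hU ψ₁ ψ₂ hcl).2.2).1 h.2)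
  constructor
  · rintro ⟨p, rfl, hp, hev⟩
    obtain ⟨a, hinf⟩ := Finite.exists_infinite_fiber p
    have hvisit : ∀ M, ∃ i, M < i ∧ p i = a := by
      intro M
      obtain ⟨i, hi, hMi⟩ := (Set.infinite_coe_iff.1 hinf).exists_gt M
      exact ⟨i, hMi, hi⟩
    obtain ⟨i₀, -, hi₀⟩ := hvisit 0
    have htail : ∀ j, i₀ ≤ j →
        p j ∈ {b | Relation.ReflTransGen edge a b ∧ Relation.ReflTransGen edge b a} := by
      intro j hj
      obtain ⟨l, hjl, hl⟩ := hvisit j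
      exact ⟨hi₀ ▸ reflTransGen_of_path hp hj, hl ▸ reflTransGen_of_path hp hjl.le⟩
    refine ⟨_, ⟨isSCC_mutual edge a, ?_, ?_⟩, a, ⟨.refl, .refl⟩,
      hi₀ ▸ reflTransGen_of_path hp (Nat.zero_le i₀)⟩
    · by_cases h : p i₀ = p (i₀ + 1)
      · have he := hp i₀
        rw [← h] at he
        exact Or.inr ⟨_, htail i₀ le_rfl, he⟩
      · exact Or.inl ⟨_, htail i₀ le_rfl, _, htail (i₀ + 1) (Nat.le_succ _), h⟩
    · rintro x ⟨hax, hxa⟩ ψ₁ ψ₂ hx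
      rcases until_persists (hstep ψ₁ ψ₂) hxa hx with h | ⟨m, hxm, hma, hm⟩
      · rw [← hi₀] at h
        obtain ⟨j, hj, hψ⟩ := hev i₀ ψ₁ ψ₂ h
        exact ⟨p j, htail j hj, hψ⟩
      · exact ⟨m, ⟨hax.trans hxm, hma⟩, hm⟩
  · rintro ⟨𝒞, ⟨⟨hconn, -⟩, hnt, hful⟩, m, hm, hnm⟩
    have : Nonempty 𝒞 := ⟨⟨m, hm⟩⟩
    obtain ⟨e, he⟩ := exists_surjective_nat 𝒞
    -- Unpairing repeats every value of the enumeration `e` at arbitrarily large indices.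
    obtain ⟨p, hp0, hp, hthrough⟩ := exists_path_through (edge := edge) (n := n)
      (w := fun k => (e k.unpair.1 : N))
      (hnm.trans (reflTransGen_of_edgeIn (hconn m hm _ (e _).2)))
      (fun k => exists_step_of_nontrivial hconn hnt (e _).2 (e _).2)
    have hvisit : ∀ x ∈ 𝒞, ∀ M, ∃ i, M ≤ i ∧ p i = x := by
      intro x hx M
      obtain ⟨k, hk⟩ := he ⟨x, hx⟩
      obtain ⟨i, hi, hpi⟩ := hthrough (Nat.pair k M)
      refine ⟨i, (Nat.right_le_pair k M).trans hi, ?_⟩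
      simpa [hk] using hpi
    refine ⟨p, hp0, hp, fun i ψ₁ ψ₂ hi => ?_⟩
    by_contra hno
    push Not at hno
    have hall : ∀ j, i ≤ j → TForm.until ψ₁ ψ₂ ∈ Q (p j) := by
      intro j hj
      induction j, hj using Nat.le_induction with
      | base => exact hi
      | succ j hj ih => exact (hstep ψ₁ ψ₂ _ _ (hp j) ih).resolve_left (hno j hj)
    obtain ⟨j, hj, hpj⟩ := hvisit m hm i
    obtain ⟨x, hx, hψ⟩ := hful m hm ψ₁ ψ₂ (hpj ▸ hall j hj)
    obtain ⟨l, hl, rfl⟩ := hvisit x hx i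
    exact hno l hl hψ
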